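/- There exists exactly one twice-differentiable function ψ : (0,∞) → ℝ such that ψ(t) > 0 and ψ''(t) = ψ(t)² + ψ(t) for all t > 0, ψ(t) → ∞ as t → 0⁺, and ψ(t) → 0 as t → ∞. Moreover this ψ satisfies t²·ψ(t) → 6 and ψ(t) − 6/t² → −1/2 as t → 0⁺, and there exists C ∈ (0,∞) such that e^t · ψ(t) → C as t → ∞. -/

import Mathlib

open Filter

/-- `ψ` is a positive solution of `ψ'' = ψ² + ψ` on `(0,∞)` with `ψ(t) → ∞` as `t → 0⁺` and
`ψ(t) → 0` as `t → ∞`. -/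
def psiCond (ψ : ℝ → ℝ) : Prop :=
  (∀ t ∈ Set.Ioi (0 : ℝ), 0 < ψ t) ∧
  (∃ ψ' : ℝ → ℝ, ∀ t ∈ Set.Ioi (0 : ℝ),
      HasDerivAt ψ (ψ' t) t ∧ HasDerivAt ψ' (ψ t ^ 2 + ψ t) t) ∧
  Tendsto ψ (nhdsWithin 0 (Set.Ioi 0)) atTop ∧
  Tendsto ψ atTop (nhds 0)

/-!
For a positive solution decaying at `∞`, convexity forces `ψ' ≤ 0` and `ψ' → 0`, so the conserved
energy `ψ'² - (2/3)ψ³ - ψ²` vanishes and `ψ' = -ψ √(1 + 2ψ/3)`. The substitution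
`ψ = 3 / (2 sinh² y)` turns this into `y' = 1/2`, and the blow-up at `0⁺` gives `y(t) = t/2`.
Hence `ψ(t) = 3 / (2 sinh² (t/2))` is the only solution, and the asymptotics are read off from it.
-/

section

open Real Set Topology

section Calculus

lemma eq_of_hasDerivAt_zero_of_tendsto {𝕜 G : Type*} [RCLike 𝕜] [NormedAddCommGroup G]
    [NormedSpace 𝕜 G] {s : Set 𝕜} (hs : IsOpen s) (hs' : IsPreconnected s) {f : 𝕜 → G}
    (hf : ∀ x ∈ s, HasDerivAt f 0 x) {l : Filter 𝕜} [l.NeBot] (hl : s ∈ l) {c : G}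
    (hlim : Tendsto f l (𝓝 c)) {x : 𝕜} (hx : x ∈ s) : f x = c := by
  have hconst : f =ᶠ[l] fun _ ↦ f x := by
    filter_upwards [hl] with y hy
    exact hs.is_const_of_deriv_eq_zero hs'
      (fun z hz ↦ (hf z hz).differentiableAt.differentiableWithinAt)
      (fun z hz ↦ (hf z hz).deriv) hy hx
  exact tendsto_nhds_unique (tendsto_const_nhds.congr' hconst.symm) hlim

variable {f f' : ℝ → ℝ} {a L : ℝ}

lemma tendsto_deriv_zero_of_convexOn_of_tendsto (hconv : ConvexOn ℝ (Ioi a) f)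
    (hf : ∀ x ∈ Ioi a, HasDerivAt f (f' x) x) (hlim : Tendsto f atTop (𝓝 L)) :
    Tendsto f' atTop (𝓝 0) := by
  have hshift (c : ℝ) : Tendsto (fun x ↦ f (x + c)) atTop (𝓝 L) :=
    hlim.comp (tendsto_atTop_add_const_right atTop c tendsto_id)
  have hlower : Tendsto (fun x ↦ f x - f (x + -1)) atTop (𝓝 0) := by
    simpa only [sub_self] using hlim.sub (hshift (-1))
  have hupper : Tendsto (fun x ↦ f (x + 1) - f x) atTop (𝓝 0) := by
    simpa only [sub_self] using (hshift 1).sub hlim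
  refine tendsto_of_tendsto_of_tendsto_of_le_of_le' hlower hupper ?_ ?_
  · filter_upwards [eventually_gt_atTop (a + 1)] with x hx
    have hxa : a < x := by linarith
    have h := hconv.slope_le_of_hasDerivAt (mem_Ioi.2 (by linarith : a < x + -1)) hxa
      (by linarith) (hf x hxa)
    simpa [slope_def_field] using h
  · filter_upwards [eventually_gt_atTop a] with x hx
    have h := hconv.le_slope_of_hasDerivAt hx (mem_Ioi.2 (by linarith : a < x + 1))
      (by linarith) (hf x hx)
    simpa [slope_def_field] using h

lemma deriv_nonpos_of_convexOn_of_tendsto (hconv : ConvexOn ℝ (Ioi a) f)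
    (hf : ∀ x ∈ Ioi a, HasDerivAt f (f' x) x) (hlim : Tendsto f atTop (𝓝 L))
    {x : ℝ} (hx : x ∈ Ioi a) : f' x ≤ 0 := by
  refine ge_of_tendsto (tendsto_deriv_zero_of_convexOn_of_tendsto hconv hf hlim) ?_
  filter_upwards [eventually_gt_atTop x] with y hxy
  have hy : y ∈ Ioi a := hx.trans hxy
  exact (hconv.le_slope_of_hasDerivAt hx hy hxy (hf x hx)).trans
    (hconv.slope_le_of_hasDerivAt hx hy hxy (hf y hy))

end Calculus

section Energy

variable {F g u v : ℝ → ℝ} {a L : ℝ}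

lemma sq_deriv_eq_two_mul_sub_of_tendsto (hF : ∀ x, HasDerivAt F (g x) x)
    (hu : ∀ t ∈ Ioi a, HasDerivAt u (v t) t) (hv : ∀ t ∈ Ioi a, HasDerivAt v (g (u t)) t)
    (hu_lim : Tendsto u atTop (𝓝 L)) (hv_lim : Tendsto v atTop (𝓝 0))
    {t : ℝ} (ht : t ∈ Ioi a) : v t ^ 2 = 2 * (F (u t) - F L) := by
  have henergy : ∀ s ∈ Ioi a, HasDerivAt (fun s ↦ v s ^ 2 - 2 * F (u s)) 0 s := fun s hs ↦ by
    refine (((hv s hs).pow 2).sub (((hF (u s)).comp s (hu s hs)).const_mul 2)).congr_deriv ?_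
    push_cast
    ring
  have hlim : Tendsto (fun s ↦ v s ^ 2 - 2 * F (u s)) atTop (𝓝 (0 ^ 2 - 2 * F L)) :=
    (hv_lim.pow 2).sub (((hF L).continuousAt.tendsto.comp hu_lim).const_mul 2)
  have hconst : v t ^ 2 - 2 * F (u t) = 0 ^ 2 - 2 * F L :=
    eq_of_hasDerivAt_zero_of_tendsto isOpen_Ioi isPreconnected_Ioi henergy (Ioi_mem_atTop a) hlim ht
  linarith

lemma deriv_eq_neg_sqrt_of_tendsto (hF : ∀ x, HasDerivAt F (g x) x)
    (hu : ∀ t ∈ Ioi a, HasDerivAt u (v t) t) (hv : ∀ t ∈ Ioi a, HasDerivAt v (g (u t)) t)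
    (hg : ∀ t ∈ Ioi a, 0 ≤ g (u t)) (hu_lim : Tendsto u atTop (𝓝 L))
    {t : ℝ} (ht : t ∈ Ioi a) : v t = -√(2 * (F (u t) - F L)) := by
  have hconv : ConvexOn ℝ (Ioi a) u := by
    refine convexOn_of_hasDerivWithinAt2_nonneg (f' := v) (f'' := fun s ↦ g (u s)) (convex_Ioi a)
      (fun s hs ↦ (hu s hs).continuousAt.continuousWithinAt) ?_ ?_ ?_ <;>
      rw [interior_Ioi]
    · exact fun s hs ↦ (hu s hs).hasDerivWithinAt
    · exact fun s hs ↦ (hv s hs).hasDerivWithinAt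
    · exact hg
  rw [← sq_deriv_eq_two_mul_sub_of_tendsto hF hu hv hu_lim
      (tendsto_deriv_zero_of_convexOn_of_tendsto hconv hu hu_lim) ht,
    sqrt_sq_eq_abs, abs_of_nonpos (deriv_nonpos_of_convexOn_of_tendsto hconv hu hu_lim ht), neg_neg]

end Energy

section Sinh

lemma tendsto_sinh_div_self : Tendsto (fun x : ℝ ↦ sinh x / x) (𝓝[≠] 0) (𝓝 1) := by
  simpa [slope_fun_def_field] using (hasDerivAt_sinh 0).tendsto_slope

lemma tendsto_half_nhdsNE_zero : Tendsto (fun x : ℝ ↦ x / 2) (𝓝[≠] 0) (𝓝[≠] 0) := by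
  refine tendsto_nhdsWithin_iff.2 ⟨tendsto_nhdsWithin_of_tendsto_nhds ?_, ?_⟩
  · exact (continuous_id.div_const (2 : ℝ)).tendsto' 0 0 (zero_div 2)
  · filter_upwards [self_mem_nhdsWithin] with x hx
    exact div_ne_zero hx two_ne_zero

lemma tendsto_cosh_sub_one_div_sq :
    Tendsto (fun x : ℝ ↦ (cosh x - 1) / x ^ 2) (𝓝[≠] 0) (𝓝 (1 / 2)) := by
  have hlim := ((tendsto_sinh_div_self.comp tendsto_half_nhdsNE_zero).pow 2).const_mul (1 / 2)
  rw [one_pow, mul_one] at hlim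
  refine hlim.congr fun x ↦ ?_
  have hcosh : cosh x = 1 + 2 * sinh (x / 2) ^ 2 := by
    rw [show x = 2 * (x / 2) by ring, cosh_two_mul, cosh_sq]
    ring_nf
  simp only [Function.comp_apply, hcosh]
  ring

lemma tendsto_sinh_sub_self_div_cube :
    Tendsto (fun x : ℝ ↦ (sinh x - x) / x ^ 3) (𝓝[≠] 0) (𝓝 (1 / 6)) := by
  refine HasDerivAt.lhopital_zero_nhdsNE (f' := fun x ↦ cosh x - 1) (g' := fun x ↦ 3 * x ^ 2)
    (.of_forall fun x ↦ (hasDerivAt_sinh x).sub (hasDerivAt_id x))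
    (.of_forall fun x ↦ by simpa using hasDerivAt_pow 3 x) ?_ ?_ ?_ ?_
  · filter_upwards [self_mem_nhdsWithin] with x hx
    exact mul_ne_zero three_ne_zero (pow_ne_zero 2 hx)
  · exact tendsto_nhdsWithin_of_tendsto_nhds
      ((continuous_sinh.sub continuous_id).tendsto' 0 0 (by simp))
  · exact tendsto_nhdsWithin_of_tendsto_nhds ((continuous_pow 3).tendsto' 0 0 (by simp))
  · have hlim := tendsto_cosh_sub_one_div_sq.const_mul (1 / 3)
    norm_num only at hlim
    exact hlim.congr fun x ↦ by ring

lemma tendsto_inv_sinh_sq_sub_inv_sq :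
    Tendsto (fun x : ℝ ↦ (sinh x ^ 2)⁻¹ - (x ^ 2)⁻¹) (𝓝[≠] 0) (𝓝 (-(1 / 3))) := by
  have hlim := (tendsto_sinh_sub_self_div_cube.neg.mul (tendsto_sinh_div_self.add_const 1)).mul
    ((tendsto_sinh_div_self.inv₀ one_ne_zero).pow 2)
  norm_num only at hlim
  refine hlim.congr' ?_
  filter_upwards [self_mem_nhdsWithin] with x (hx : x ≠ 0)
  have hsinh : sinh x ≠ 0 := sinh_ne_zero.2 hx
  field_simp
  ring

lemma tendsto_exp_div_sinh_half_sq :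
    Tendsto (fun t : ℝ ↦ exp t / sinh (t / 2) ^ 2) atTop (𝓝 4) := by
  have hlim := (((tendsto_exp_neg_atTop_nhds_zero.const_sub 1).pow 2).inv₀
    (by norm_num)).const_mul 4
  norm_num only at hlim
  refine hlim.congr fun t ↦ ?_
  have hexp : exp t = exp (t / 2) ^ 2 := by rw [← exp_nat_mul]; ring_nf
  have hsinh : 2 * sinh (t / 2) = exp (t / 2) * (1 - exp (-t)) := by
    rw [sinh_eq, mul_sub, ← exp_add]
    ring_nf
  have hsq : sinh (t / 2) ^ 2 = exp t * (1 - exp (-t)) ^ 2 / 4 := by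
    rw [hexp, ← mul_pow, ← hsinh]
    ring
  rw [hsq]
  field_simp

end Sinh

/-- The closed form `(3/2) csch² (t/2)` of the solution on `(0,∞)`. -/
noncomputable def explicitPsi (t : ℝ) : ℝ := 3 / (2 * sinh (t / 2) ^ 2)

section ExplicitPsi

lemma tendsto_sq_mul_explicitPsi :
    Tendsto (fun t ↦ t ^ 2 * explicitPsi t) (𝓝[>] 0) (𝓝 6) := by
  have hlim := ((((tendsto_sinh_div_self.comp tendsto_half_nhdsNE_zero).mono_left
    (nhdsGT_le_nhdsNE 0)).inv₀ one_ne_zero).pow 2).const_mul 6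
  norm_num only at hlim
  refine hlim.congr fun t ↦ ?_
  simp only [explicitPsi, Function.comp_apply, inv_div]
  ring

lemma tendsto_explicitPsi_sub_six_div_sq :
    Tendsto (fun t ↦ explicitPsi t - 6 / t ^ 2) (𝓝[>] 0) (𝓝 (-(1 / 2))) := by
  rw [show (-(1 / 2) : ℝ) = 3 / 2 * -(1 / 3) by norm_num]
  refine (((tendsto_inv_sinh_sq_sub_inv_sq.comp tendsto_half_nhdsNE_zero).mono_left
    (nhdsGT_le_nhdsNE 0)).const_mul (3 / 2)).congr fun t ↦ ?_
  simp only [explicitPsi, Function.comp_apply]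
  ring

lemma tendsto_exp_mul_explicitPsi :
    Tendsto (fun t ↦ exp t * explicitPsi t) atTop (𝓝 6) := by
  have hlim := tendsto_exp_div_sinh_half_sq.const_mul (3 / 2)
  norm_num only at hlim
  refine hlim.congr fun t ↦ ?_
  rw [explicitPsi]
  ring

lemma tendsto_explicitPsi_nhdsGT_zero : Tendsto explicitPsi (𝓝[>] 0) atTop := by
  have hinv : Tendsto (fun t : ℝ ↦ t⁻¹ ^ 2) (𝓝[>] 0) atTop :=
    (tendsto_pow_atTop two_ne_zero).comp tendsto_inv_nhdsGT_zero
  refine (tendsto_sq_mul_explicitPsi.pos_mul_atTop (by norm_num) hinv).congr' ?_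
  filter_upwards [self_mem_nhdsWithin] with t (ht : 0 < t)
  field_simp

lemma tendsto_explicitPsi_atTop : Tendsto explicitPsi atTop (𝓝 0) := by
  have hlim := tendsto_exp_mul_explicitPsi.mul tendsto_exp_neg_atTop_nhds_zero
  rw [mul_zero] at hlim
  refine hlim.congr fun t ↦ ?_
  rw [mul_right_comm, ← exp_add, add_neg_cancel, exp_zero, one_mul]

lemma hasDerivAt_explicitPsi {t : ℝ} (ht : 0 < t) :
    HasDerivAt explicitPsi (-(3 * cosh (t / 2)) / (2 * sinh (t / 2) ^ 3)) t := by
  have hsinh : sinh (t / 2) ≠ 0 := (sinh_pos_iff.2 (half_pos ht)).ne'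
  have hhalf : HasDerivAt (fun t : ℝ ↦ t / 2) (1 / 2) t := (hasDerivAt_id t).div_const 2
  have hden : 2 * sinh (t / 2) ^ 2 ≠ 0 := mul_ne_zero two_ne_zero (pow_ne_zero 2 hsinh)
  refine ((hasDerivAt_const t 3).div ((hhalf.sinh.pow 2).const_mul 2) hden).congr_deriv ?_
  simp only [Pi.pow_apply]
  push_cast
  field_simp
  ring

lemma hasDerivAt_deriv_explicitPsi {t : ℝ} (ht : 0 < t) :
    HasDerivAt (fun t ↦ -(3 * cosh (t / 2)) / (2 * sinh (t / 2) ^ 3))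
      (explicitPsi t ^ 2 + explicitPsi t) t := by
  have hsinh : sinh (t / 2) ≠ 0 := (sinh_pos_iff.2 (half_pos ht)).ne'
  have hhalf : HasDerivAt (fun t : ℝ ↦ t / 2) (1 / 2) t := (hasDerivAt_id t).div_const 2
  have hden : 2 * sinh (t / 2) ^ 3 ≠ 0 := mul_ne_zero two_ne_zero (pow_ne_zero 3 hsinh)
  refine ((hhalf.cosh.const_mul 3).neg.div ((hhalf.sinh.pow 3).const_mul 2) hden).congr_deriv ?_
  simp only [explicitPsi, Pi.pow_apply, Pi.neg_apply]
  field_simp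
  rw [cosh_sq]
  push_cast
  ring

lemma psiCond_explicitPsi : psiCond explicitPsi := by
  refine ⟨fun t ht ↦ ?_,
    ⟨_, fun t ht ↦ ⟨hasDerivAt_explicitPsi ht, hasDerivAt_deriv_explicitPsi ht⟩⟩,
    tendsto_explicitPsi_nhdsGT_zero, tendsto_explicitPsi_atTop⟩
  have hsinh : 0 < sinh (t / 2) := sinh_pos_iff.2 (half_pos ht)
  unfold explicitPsi
  positivity

end ExplicitPsi

section Uniqueness

variable {ψ : ℝ → ℝ} {t : ℝ}

lemma hasDerivAt_arsinh_sqrt (hpos : 0 < ψ t)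
    (hψ : HasDerivAt ψ (-(ψ t * √(1 + 2 / 3 * ψ t))) t) :
    HasDerivAt (fun s ↦ arsinh √(3 / (2 * ψ s))) (1 / 2) t := by
  have hquot : 0 < 3 / (2 * ψ t) := by positivity
  refine ((((hasDerivAt_const t 3).div (hψ.const_mul 2) (by positivity)).sqrt
    hquot.ne').arsinh).congr_deriv ?_
  have hsqrt : √(1 + 3 / (2 * ψ t)) = √(3 / (2 * ψ t)) * √(1 + 2 / 3 * ψ t) := by
    rw [← sqrt_mul hquot.le]
    congr 1
    field_simp
    ring
  have hr : √(3 / (2 * ψ t)) ^ 2 = 3 / (2 * ψ t) := sq_sqrt hquot.le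
  have : 0 < √(3 / (2 * ψ t)) := sqrt_pos.2 hquot
  have : 0 < √(1 + 2 / 3 * ψ t) := sqrt_pos.2 (by positivity)
  simp only [Pi.div_apply, smul_eq_mul, hr, hsqrt]
  field_simp
  rw [hr]
  field_simp
  ring

namespace psiCond

lemma hasDerivAt_neg_mul_sqrt (h : psiCond ψ) (ht : 0 < t) :
    HasDerivAt ψ (-(ψ t * √(1 + 2 / 3 * ψ t))) t := by
  obtain ⟨hpos, ⟨ψ', hψ⟩, -, hlim⟩ := h
  have hpot : ∀ x : ℝ, HasDerivAt (fun x ↦ x ^ 3 / 3 + x ^ 2 / 2) (x ^ 2 + x) x := fun x ↦ by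
    refine (((hasDerivAt_pow 3 x).div_const 3).add
      ((hasDerivAt_pow 2 x).div_const 2)).congr_deriv ?_
    push_cast
    ring
  have hnonneg : ∀ s ∈ Ioi 0, 0 ≤ ψ s ^ 2 + ψ s := fun s hs ↦ by
    have := hpos s hs
    positivity
  have hderiv : ψ' t = -√(2 * (ψ t ^ 3 / 3 + ψ t ^ 2 / 2 - (0 ^ 3 / 3 + 0 ^ 2 / 2))) :=
    deriv_eq_neg_sqrt_of_tendsto hpot (fun s hs ↦ (hψ s hs).1) (fun s hs ↦ (hψ s hs).2) hnonneg
      hlim ht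
  have henergy : 2 * (ψ t ^ 3 / 3 + ψ t ^ 2 / 2 - (0 ^ 3 / 3 + 0 ^ 2 / 2)) =
      ψ t ^ 2 * (1 + 2 / 3 * ψ t) := by ring
  rw [henergy, sqrt_mul (sq_nonneg _), sqrt_sq (hpos t ht).le] at hderiv
  exact hderiv ▸ (hψ t ht).1

lemma arsinh_sqrt_eq_half (h : psiCond ψ) (ht : 0 < t) : arsinh √(3 / (2 * ψ t)) = t / 2 := by
  have hderiv : ∀ s ∈ Ioi 0, HasDerivAt (fun s ↦ arsinh √(3 / (2 * ψ s)) - s / 2) 0 s :=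
    fun s hs ↦ ((hasDerivAt_arsinh_sqrt (h.1 s hs) (h.hasDerivAt_neg_mul_sqrt hs)).sub
      ((hasDerivAt_id s).div_const 2)).congr_deriv (sub_self _)
  have hquot : Tendsto (fun s ↦ 3 / (2 * ψ s)) (𝓝[>] 0) (𝓝 0) :=
    tendsto_const_nhds.div_atTop (h.2.2.1.const_mul_atTop two_pos)
  have hhalf : Tendsto (fun s : ℝ ↦ s / 2) (𝓝[>] 0) (𝓝 0) :=
    tendsto_nhdsWithin_of_tendsto_nhds ((continuous_id.div_const (2 : ℝ)).tendsto' 0 0 (zero_div 2))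
  have hlim : Tendsto (fun s ↦ arsinh √(3 / (2 * ψ s)) - s / 2) (𝓝[>] 0) (𝓝 0) := by
    simpa using hquot.sqrt.arsinh.sub hhalf
  exact sub_eq_zero.1 (eq_of_hasDerivAt_zero_of_tendsto isOpen_Ioi isPreconnected_Ioi hderiv
    self_mem_nhdsWithin hlim ht)

lemma eqOn_explicitPsi (h : psiCond ψ) : EqOn ψ explicitPsi (Ioi 0) := fun t ht ↦ by
  have hpos := h.1 t ht
  rw [explicitPsi, ← h.arsinh_sqrt_eq_half ht, sinh_arsinh, sq_sqrt (by positivity)]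
  field_simp

end psiCond

end Uniqueness

end

/-- Appendix B of the paper.  There exists exactly one twice-differentiable
`ψ : (0,∞) → ℝ` that is positive, satisfies `ψ'' = ψ² + ψ`, blows up at `0⁺` and vanishes at
`∞`; moreover `t²·ψ(t) → 6` and `ψ(t) − 6/t² → −1/2` as `t → 0⁺`, and `e^t·ψ(t) → C` as
`t → ∞` for some `C ∈ (0,∞)`. -/
theorem psi_exists_unique_asymptotics :
    (∃ ψ : ℝ → ℝ, psiCond ψ) ∧
    (∀ ψ₁ ψ₂ : ℝ → ℝ, psiCond ψ₁ → psiCond ψ₂ → Set.EqOn ψ₁ ψ₂ (Set.Ioi 0)) ∧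
    ∀ ψ : ℝ → ℝ, psiCond ψ →
      Tendsto (fun t : ℝ => t ^ 2 * ψ t) (nhdsWithin 0 (Set.Ioi 0)) (nhds 6) ∧
      Tendsto (fun t : ℝ => ψ t - 6 / t ^ 2) (nhdsWithin 0 (Set.Ioi 0)) (nhds (-(1 / 2))) ∧
      ∃ C : ℝ, 0 < C ∧ Tendsto (fun t : ℝ => Real.exp t * ψ t) atTop (nhds C) := by
  refine ⟨⟨explicitPsi, psiCond_explicitPsi⟩,
    fun ψ₁ ψ₂ h₁ h₂ ↦ h₁.eqOn_explicitPsi.trans h₂.eqOn_explicitPsi.symm, fun ψ h ↦ ?_⟩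
  have hzero : explicitPsi =ᶠ[nhdsWithin 0 (Set.Ioi 0)] ψ :=
    h.eqOn_explicitPsi.symm.eventuallyEq_of_mem self_mem_nhdsWithin
  have htop : explicitPsi =ᶠ[atTop] ψ :=
    h.eqOn_explicitPsi.symm.eventuallyEq_of_mem (Ioi_mem_atTop 0)
  exact ⟨tendsto_sq_mul_explicitPsi.congr' (EventuallyEq.rfl.mul hzero),
    tendsto_explicitPsi_sub_six_div_sq.congr' (hzero.sub .rfl),
    6, by norm_num, tendsto_exp_mul_explicitPsi.congr' (EventuallyEq.rfl.mul htop)⟩
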